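/- Let H = (F, θ₀, θ₁, θ₂) be a combinatorial hypermap and let A, B ⊆ E(H) (subsets of hyperedges of an iterated partial dual being identified with subsets of E(H) via equality of flag sets). Then (H^A)^B = (H^B)^A = H^{(A ∪ B) ∖ (A ∩ B)}, the partial dual with respect to the symmetric difference of A and B; consequently (H^A)^{(A ∪ B) ∖ (A ∩ B)} = H^B. -/

import Mathlib

open Classical

/-- A pre-hypermap on a set of flags `F`: three structure maps `θ₀, θ₁, θ₂`.
It is a genuine combinatorial hypermap when the three maps are
fixed-point-free involutions (see `PreHypermap.IsHypermap`). -/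
structure PreHypermap (F : Type*) where
  theta : Fin 3 → F → F

namespace PreHypermap

variable {F : Type*}

/-- `H` is a combinatorial hypermap: `θ₀, θ₁, θ₂` are fixed-point-free involutions. -/
def IsHypermap (H : PreHypermap F) : Prop :=
  ∀ i : Fin 3, Function.Involutive (H.theta i) ∧ ∀ x : F, H.theta i x ≠ x

/-- The equivalence relation on `F` generated by a set of functions `F → F`;
for a set of involutions, two flags are related iff they are in the same orbit
of the subgroup generated by those involutions. -/
def orbitRel (fs : Set (F → F)) : F → F → Prop :=
  Relation.EqvGen (fun x y => ∃ f ∈ fs, f x = y)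

/-- The setoid of orbits of the subgroup generated by a set of involutions. -/
def orbitSetoid (fs : Set (F → F)) : Setoid F :=
  Relation.EqvGen.setoid (fun x y => ∃ f ∈ fs, f x = y)

/-- The number of orbits on `F` of the subgroup generated by a set of involutions. -/
noncomputable def orbitCount (fs : Set (F → F)) : ℕ :=
  Nat.card (Quotient (orbitSetoid fs))

/-- `v H`: the number of vertices, i.e. orbits of `⟨θ₁, θ₂⟩`. -/
noncomputable def v (H : PreHypermap F) : ℕ := orbitCount {H.theta 1, H.theta 2}

/-- `e H`: the number of hyperedges, i.e. orbits of `⟨θ₀, θ₂⟩`. -/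
noncomputable def e (H : PreHypermap F) : ℕ := orbitCount {H.theta 0, H.theta 2}

/-- `f H`: the number of faces, i.e. orbits of `⟨θ₀, θ₁⟩`. -/
noncomputable def f (H : PreHypermap F) : ℕ := orbitCount {H.theta 0, H.theta 1}

/-- `c H`: the number of components, i.e. orbits of `⟨θ₀, θ₁, θ₂⟩`. -/
noncomputable def c (H : PreHypermap F) : ℕ :=
  orbitCount {H.theta 0, H.theta 1, H.theta 2}

/-- `H` is connected if it has exactly one component. -/
def Connected (H : PreHypermap F) : Prop := H.c = 1

/-- The Euler characteristic `χ(H) = v + e + f - |F|/2`. -/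
noncomputable def chi (H : PreHypermap F) : ℤ :=
  (H.v : ℤ) + (H.e : ℤ) + (H.f : ℤ) - (Nat.card F : ℤ) / 2

/-- The Euler genus `ε(H) = 2 c(H) - χ(H)`. -/
noncomputable def eulerGenus (H : PreHypermap F) : ℤ := 2 * (H.c : ℤ) - H.chi

/-- `H` is orientable: there is `o : F → {+1, -1}` with `o (θᵢ x) = - o x` for all `i, x`. -/
def Orientable (H : PreHypermap F) : Prop :=
  ∃ o : F → ℤ, (∀ x : F, o x = 1 ∨ o x = -1) ∧
    ∀ (i : Fin 3) (x : F), o (H.theta i x) = - o x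

/-- The set `E(H)` of hyperedges of `H`, each hyperedge being its set of flags
(an orbit of `⟨θ₀, θ₂⟩`). -/
def edges (H : PreHypermap F) : Set (Set F) :=
  {s : Set F | ∃ x : F, s = {y : F | orbitRel {H.theta 0, H.theta 2} x y}}

/-- The geometric dual `H* = (F, θ₂, θ₁, θ₀)`. -/
def dual (H : PreHypermap F) : PreHypermap F where
  theta := fun i => H.theta (2 - i)

/-- The partial dual of `H` with respect to a set `S` of flags (interchange `θ₀` and
`θ₂` on `S`); for `A ⊆ E(H)` the partial dual `H^A` is `H.pdual (⋃₀ A)`. -/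
noncomputable def pdual (H : PreHypermap F) (S : Set F) : PreHypermap F where
  theta := fun i x =>
    if i = 1 then H.theta 1 x
    else if x ∈ S then H.theta (2 - i) x else H.theta i x

/-- `f(A)` for `A ⊆ E(H)`: the number of orbits of `⟨θ₁, θ₂^A⟩` (which equals `v(H^A)`). -/
noncomputable def subf (H : PreHypermap F) (A : Set (Set F)) : ℕ :=
  (H.pdual (⋃₀ A)).v

/-- `c(A)` for `A ⊆ E(H)`: the number of orbits of the subgroup generated by `θ₁`, `θ₂`
and the permutation equal to `θ₀` on `S(A)` and the identity elsewhere. -/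
noncomputable def subc (H : PreHypermap F) (A : Set (Set F)) : ℕ :=
  orbitCount {H.theta 1, H.theta 2, fun x => if x ∈ ⋃₀ A then H.theta 0 x else x}

/-- `χ(A) = v(A) + e(A) + f(A) - |S(A)|/2` for `A ⊆ E(H)`, where `v(A) = v(H)`,
`e(A) = |A|`, `f(A) = v(H^A)` and `S(A) = ⋃₀ A`. -/
noncomputable def subchi (H : PreHypermap F) (A : Set (Set F)) : ℤ :=
  (H.v : ℤ) + (A.ncard : ℤ) + (H.subf A : ℤ) - ((⋃₀ A).ncard : ℤ) / 2

/-- `ε(A) = 2 c(A) - χ(A)` for `A ⊆ E(H)`. -/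
noncomputable def subeps (H : PreHypermap F) (A : Set (Set F)) : ℤ :=
  2 * (H.subc A : ℤ) - H.subchi A

/-- The hyperedge set of `H` as a finset. -/
noncomputable def edgeFinset (H : PreHypermap F) [Fintype F] : Finset (Set F) :=
  (Set.toFinite H.edges).toFinset

/-- The partial-dual Euler-genus polynomial `∂ε_H(z) = Σ_{A ⊆ E(H)} z^(ε(H^A))`. -/
noncomputable def pdPoly (H : PreHypermap F) [Fintype F] : Polynomial ℕ :=
  ∑ A ∈ H.edgeFinset.powerset,
    Polynomial.X ^ ((H.pdual (⋃₀ (A : Set (Set F)))).eulerGenus).toNat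

/-- The partial-dual orientable-genus polynomial `∂Γ_H(z) = Σ_{A ⊆ E(H)} z^(ε(H^A)/2)`. -/
noncomputable def pdGammaPoly (H : PreHypermap F) [Fintype F] : Polynomial ℕ :=
  ∑ A ∈ H.edgeFinset.powerset,
    Polynomial.X ^ (((H.pdual (⋃₀ (A : Set (Set F)))).eulerGenus) / 2).toNat

/-- The join `H₁ ∨ H₂` of two hypermaps on disjoint flag sets, joining the corner
`{x, θ₁ x}` of `H₁` to the corner `{y, θ₁′ y}` of `H₂`. -/
noncomputable def join {F₁ F₂ : Type*} (H₁ : PreHypermap F₁) (H₂ : PreHypermap F₂)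
    (x : F₁) (y : F₂) : PreHypermap (F₁ ⊕ F₂) where
  theta := fun i z =>
    if i = 1 then
      if z = Sum.inl x then Sum.inr y
      else if z = Sum.inr y then Sum.inl x
      else if z = Sum.inl (H₁.theta 1 x) then Sum.inr (H₂.theta 1 y)
      else if z = Sum.inr (H₂.theta 1 y) then Sum.inl (H₁.theta 1 x)
      else Sum.map (H₁.theta 1) (H₂.theta 1) z
    else Sum.map (H₁.theta i) (H₂.theta i) z

/-- The bar-amalgamation `H₁ ⊕ H₂` of two hypermaps on disjoint flag sets, with a new
connecting hyperedge `{p, q, p', q'} = Fin 4` meeting the corner `{x, θ₁ x}` of `H₁`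
and the corner `{y, θ₁′ y}` of `H₂`. -/
noncomputable def bar {F₁ F₂ : Type*} (H₁ : PreHypermap F₁) (H₂ : PreHypermap F₂)
    (x : F₁) (y : F₂) : PreHypermap ((F₁ ⊕ F₂) ⊕ Fin 4) where
  theta := fun i z =>
    if i = 0 then
      match z with
      | .inl (.inl a) => .inl (.inl (H₁.theta 0 a))
      | .inl (.inr b) => .inl (.inr (H₂.theta 0 b))
      | .inr k => .inr (Equiv.swap (0 : Fin 4) 2 (Equiv.swap (1 : Fin 4) 3 k))
    else if i = 2 then
      match z with
      | .inl (.inl a) => .inl (.inl (H₁.theta 2 a))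
      | .inl (.inr b) => .inl (.inr (H₂.theta 2 b))
      | .inr k => .inr (Equiv.swap (0 : Fin 4) 1 (Equiv.swap (2 : Fin 4) 3 k))
    else
      if z = .inl (.inl x) then .inr 0
      else if z = .inr 0 then .inl (.inl x)
      else if z = .inl (.inl (H₁.theta 1 x)) then .inr 1
      else if z = .inr 1 then .inl (.inl (H₁.theta 1 x))
      else if z = .inl (.inr y) then .inr 2
      else if z = .inr 2 then .inl (.inr y)
      else if z = .inl (.inr (H₂.theta 1 y)) then .inr 3
      else if z = .inr 3 then .inl (.inr (H₂.theta 1 y))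
      else
        match z with
        | .inl (.inl a) => .inl (.inl (H₁.theta 1 a))
        | .inl (.inr b) => .inl (.inr (H₂.theta 1 b))
        | .inr k => .inr k

end PreHypermap

section SymmDiff

open scoped symmDiff

theorem biUnion_symmDiff_biUnion_eq {ι α : Type*} {s t : Set ι} {f : ι → Set α}
    (h : (s ∪ t).PairwiseDisjoint f) :
    (⋃ i ∈ s, f i) ∆ (⋃ i ∈ t, f i) = ⋃ i ∈ s ∆ t, f i := by
  rw [Set.symmDiff_def, Set.symmDiff_def, Set.biUnion_sdiff_biUnion_eq h,
    Set.biUnion_sdiff_biUnion_eq (Set.union_comm s t ▸ h), Set.biUnion_union]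

theorem sUnion_symmDiff_sUnion_eq {α : Type*} {A B : Set (Set α)}
    (h : (A ∪ B).PairwiseDisjoint id) : ⋃₀ A ∆ ⋃₀ B = ⋃₀ (A ∆ B) := by
  simpa only [Set.sUnion_eq_biUnion, id] using biUnion_symmDiff_biUnion_eq h

namespace PreHypermap

variable {F : Type*} (H : PreHypermap F)

theorem edges_eq_classes : H.edges = (orbitSetoid {H.theta 0, H.theta 2}).classes := by
  ext s
  refine exists_congr fun x => ?_
  have orbit_eq : {y | orbitRel {H.theta 0, H.theta 2} x y} =
      {y | orbitSetoid {H.theta 0, H.theta 2} y x} :=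
    Set.ext fun _ => Setoid.comm' (orbitSetoid {H.theta 0, H.theta 2})
  rw [orbit_eq]

theorem pairwiseDisjoint_edges : H.edges.PairwiseDisjoint id := by
  rw [edges_eq_classes]
  exact (Setoid.isPartition_classes _).pairwiseDisjoint

theorem pdual_pdual (S T : Set F) : (H.pdual S).pdual T = H.pdual (S ∆ T) := by
  -- Interchanging `θ₀` and `θ₂` twice is the identity, so only flags in exactly one of the
  -- two sets are affected.
  have two_sub_eq_one (i : Fin 3) : 2 - i = 1 ↔ i = 1 := by decide +revert
  refine congrArg PreHypermap.mk (funext₂ fun i x => ?_)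
  by_cases hS : x ∈ S <;> by_cases hT : x ∈ T <;>
    simp +contextual [pdual, Set.mem_symmDiff, hS, hT, two_sub_eq_one]

theorem pdual_pdual_comm (S T : Set F) : (H.pdual S).pdual T = (H.pdual T).pdual S := by
  rw [pdual_pdual, pdual_pdual, symmDiff_comm]

theorem pdual_pdual_symmDiff (S T : Set F) : (H.pdual S).pdual (S ∆ T) = H.pdual T := by
  rw [pdual_pdual, symmDiff_symmDiff_cancel_left]

end PreHypermap

theorem statement_5_general {F : Type*} (H : PreHypermap F) {A B : Set (Set F)}
    (hAB : (A ∪ B).PairwiseDisjoint id) :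
    (H.pdual (⋃₀ A)).pdual (⋃₀ B) = (H.pdual (⋃₀ B)).pdual (⋃₀ A) ∧
    (H.pdual (⋃₀ A)).pdual (⋃₀ B) = H.pdual (⋃₀ ((A ∪ B) \ (A ∩ B))) ∧
    (H.pdual (⋃₀ A)).pdual (⋃₀ ((A ∪ B) \ (A ∩ B))) = H.pdual (⋃₀ B) := by
  have flags_symmDiff : ⋃₀ ((A ∪ B) \ (A ∩ B)) = ⋃₀ A ∆ ⋃₀ B := by
    rw [sUnion_symmDiff_sUnion_eq hAB]
    exact congrArg Set.sUnion (symmDiff_eq_sup_sdiff_inf A B).symm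
  rw [flags_symmDiff]
  exact ⟨H.pdual_pdual_comm _ _, H.pdual_pdual _ _, H.pdual_pdual_symmDiff _ _⟩

end SymmDiff

open PreHypermap in
/-- `(H^A)^B = (H^B)^A = H^(A Δ B)` and `(H^A)^(A Δ B) = H^B`, where
`A Δ B = (A ∪ B) \ (A ∩ B)` is the symmetric difference. -/
theorem statement_5 {F : Type} [Fintype F] (H : PreHypermap F)
    (hH : H.IsHypermap) (A B : Set (Set F)) (hA : A ⊆ H.edges) (hB : B ⊆ H.edges) :
    (H.pdual (⋃₀ A)).pdual (⋃₀ B) = (H.pdual (⋃₀ B)).pdual (⋃₀ A) ∧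
    (H.pdual (⋃₀ A)).pdual (⋃₀ B) = H.pdual (⋃₀ ((A ∪ B) \ (A ∩ B))) ∧
    (H.pdual (⋃₀ A)).pdual (⋃₀ ((A ∪ B) \ (A ∩ B))) = H.pdual (⋃₀ B) := by
  exact statement_5_general H (H.pairwiseDisjoint_edges.subset (Set.union_subset hA hB))
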